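/- arXiv:1101.2875 — 2 statements merged into one kernel-verified Lean document; each statement's English description precedes it below -/
import Mathlib

section
/- For every integer n ≥ 0, all real x, y, ρ, q with |q| < 1, the Al-Salam–Chihara polynomial has the expansion P_n(x|y,ρ,q) = Σ_{k=0}^{⌊n/2⌋} [n choose k]_q · [n−k choose k]_q · [k]_q! · q^{k(k−1)} · ρ^{2k} · Σ_{s=0}^{n−2k} (−1)^s · [n−2k choose s]_q · q^{s(s−1)/2} · (q^k·ρ)^s · H_{n−2k−s}(x|q) · H_s(y|q). -/
noncomputable section

open Finset

/-- The q-integer `[n]_q = 1 + q + ⋯ + q^{n-1}`. -/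
def qInt (q : ℝ) (n : ℕ) : ℝ := ∑ i ∈ Finset.range n, q ^ i

/-- The q-factorial `[n]_q!`. -/
def qFact (q : ℝ) (n : ℕ) : ℝ := ∏ j ∈ Finset.range n, qInt q (j + 1)

/-- The q-binomial coefficient. -/
def qBinom (q : ℝ) (n k : ℕ) : ℝ :=
  if k ≤ n then qFact q n / (qFact q (n - k) * qFact q k) else 0

/-- The finite q-Pochhammer symbol `(a;q)_n`. -/
def qPoch (a q : ℝ) (n : ℕ) : ℝ := ∏ j ∈ Finset.range n, (1 - a * q ^ j)

/-- The infinite q-Pochhammer symbol `(a;q)_∞`. -/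
def qPochInf (a q : ℝ) : ℝ := ∏' j : ℕ, (1 - a * q ^ j)

/-- The q-Hermite polynomials `H_n(x|q)`. -/
def qHermite (q : ℝ) : ℕ → ℝ → ℝ
  | 0, _ => 1
  | 1, x => x
  | n + 2, x => x * qHermite q (n + 1) x - qInt q (n + 1) * qHermite q n x

/-- The rescaled q-ultraspherical polynomials `R_n(x|β,q)`. -/
def qUltra (q β : ℝ) : ℕ → ℝ → ℝ
  | 0, _ => 1
  | 1, x => (1 - β) * x
  | n + 2, x => (1 - β * q ^ (n + 1)) * x * qUltra q β (n + 1) x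
      - (1 - β ^ 2 * q ^ n) * qInt q (n + 1) * qUltra q β n x

/-- The Al-Salam–Chihara polynomials `P_n(x|y,ρ,q)`. -/
def ASC (q y ρ : ℝ) : ℕ → ℝ → ℝ
  | 0, _ => 1
  | 1, x => x - ρ * y
  | n + 2, x => (x - ρ * y * q ^ (n + 1)) * ASC q y ρ (n + 1) x
      - (1 - ρ ^ 2 * q ^ n) * qInt q (n + 1) * ASC q y ρ n x

/-- The polynomials `B_n(y|q)` (q⁻¹-Hermite related). -/
def qB (q : ℝ) : ℕ → ℝ → ℝ
  | 0, _ => 1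
  | 1, y => -y
  | n + 2, y => -q ^ (n + 1) * y * qB q (n + 1) y + q ^ n * qInt q (n + 1) * qB q n y

/-- The big q-Hermite polynomials `H_n(x|a,q)`. -/
def bigqHermite (q a : ℝ) : ℕ → ℝ → ℝ
  | 0, _ => 1
  | 1, x => x - a
  | n + 2, x => (x - a * q ^ (n + 1)) * bigqHermite q a (n + 1) x
      - qInt q (n + 1) * bigqHermite q a n x

/-- The probabilistic Hermite polynomials `H_n(x)`. -/
def probHermite : ℕ → ℝ → ℝ
  | 0, _ => 1
  | 1, x => x
  | n + 2, x => x * probHermite (n + 1) x - (n + 1) * probHermite n x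

/-- The probabilistic Hermite polynomials on ℂ. -/
def probHermiteC : ℕ → ℂ → ℂ
  | 0, _ => 1
  | 1, x => x
  | n + 2, x => x * probHermiteC (n + 1) x - (n + 1) * probHermiteC n x

/-- The Chebyshev polynomials of the second kind. -/
def chebU : ℕ → ℝ → ℝ
  | 0, _ => 1
  | 1, x => 2 * x
  | n + 2, x => 2 * x * chebU (n + 1) x - chebU n x

/-- The Chebyshev polynomials of the first kind. -/
def chebT : ℕ → ℝ → ℝ
  | 0, _ => 1
  | 1, x => x
  | n + 2, x => 2 * x * chebT (n + 1) x - chebT n x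

/-- `W_k(x,y,t|q)`. -/
def Wk (q x y t : ℝ) (k : ℕ) : ℝ :=
  (1 - t ^ 2 * q ^ (2 * k)) ^ 2 - (1 - q) * x * y * t * q ^ k * (1 + t ^ 2 * q ^ (2 * k))
    + (1 - q) * t ^ 2 * q ^ (2 * k) * (x ^ 2 + y ^ 2)

/-- `V_k(x,a|q)`. -/
def Vk (q x a : ℝ) (k : ℕ) : ℝ :=
  1 - (1 - q) * a * x * q ^ k + (1 - q) * a ^ 2 * q ^ (2 * k)

/-- `L_k(x,a|q)`. -/
def Lk (q x a : ℝ) (k : ℕ) : ℝ :=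
  (1 + a * q ^ k) ^ 2 - (1 - q) * x ^ 2 * a ^ 2 * q ^ k

/-- The support interval `S(q) = [-2/√(1-q), 2/√(1-q)]` for `|q| < 1`. -/
def Sq (q : ℝ) : Set ℝ := Set.Icc (-(2 / Real.sqrt (1 - q))) (2 / Real.sqrt (1 - q))

lemma qInt_pos {q : ℝ} (hq : |q| < 1) (n : ℕ) : 0 < qInt q (n + 1) :=
  geom_sum_pos' (by linarith [(abs_lt.mp hq).1]) n.succ_ne_zero

lemma qInt_zero (q : ℝ) : qInt q 0 = 0 := sum_range_zero _

lemma qInt_add (q : ℝ) (m n : ℕ) : qInt q (m + n) = qInt q m + q ^ m * qInt q n := by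
  simp only [qInt, sum_range_add, pow_add, mul_sum]

lemma qFact_succ (q : ℝ) (n : ℕ) : qFact q (n + 1) = qFact q n * qInt q (n + 1) :=
  prod_range_succ _ _

lemma qFact_ne_zero {q : ℝ} (hq : |q| < 1) (n : ℕ) : qFact q n ≠ 0 :=
  prod_ne_zero_iff.mpr fun j _ => ne_of_gt (qInt_pos hq j)

/-- The normalized q-Hermite polynomials `H_n(x|q) / [n]_q!`. -/
def qHermiteNorm (q x : ℝ) (n : ℕ) : ℝ := qHermite q n x / qFact q n

/-- The normalized polynomials `B_n(y|q) / [n]_q!`. -/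
def qBNorm (q y : ℝ) (n : ℕ) : ℝ := qB q n y / qFact q n

/-- The sequence `0, f 0, f 1, …`. -/
def shiftRight (f : ℕ → ℝ) : ℕ → ℝ
  | 0 => 0
  | n + 1 => f n

lemma qHermiteNorm_succ {q : ℝ} (hq : |q| < 1) (x : ℝ) (n : ℕ) :
    x * qHermiteNorm q x n =
      qInt q (n + 1) * qHermiteNorm q x (n + 1) + shiftRight (qHermiteNorm q x) n := by
  cases n with
  | zero => simp [qHermiteNorm, shiftRight, qHermite, qFact, qInt]
  | succ n =>
    have h₀ := qFact_ne_zero hq n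
    have h₁ := (qInt_pos hq n).ne'
    have h₂ := (qInt_pos hq (n + 1)).ne'
    simp only [qHermiteNorm, shiftRight, qHermite, qFact_succ]
    field_simp
    ring

lemma qBNorm_succ {q : ℝ} (hq : |q| < 1) (y : ℝ) (n : ℕ) :
    qInt q (n + 1) * qBNorm q y (n + 1) =
      -q ^ n * y * qBNorm q y n + q ^ (n - 1) * shiftRight (qBNorm q y) n := by
  cases n with
  | zero => simp [qBNorm, shiftRight, qB, qFact, qInt]
  | succ n =>
    have h₀ := qFact_ne_zero hq n
    have h₁ := (qInt_pos hq n).ne'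
    have h₂ := (qInt_pos hq (n + 1)).ne'
    simp only [qBNorm, shiftRight, qB, qFact_succ, Nat.add_sub_cancel]
    field_simp

lemma sum_antidiagonal_shiftRight_snd (c f : ℕ → ℝ) (n : ℕ) :
    ∑ p ∈ antidiagonal (n + 1), c p.1 * shiftRight f p.2 =
      ∑ p ∈ antidiagonal n, c p.1 * f p.2 := by
  simp [Nat.sum_antidiagonal_succ', shiftRight]

lemma sum_antidiagonal_shiftRight_fst (c f : ℕ → ℝ) (n : ℕ) :
    ∑ p ∈ antidiagonal (n + 1), shiftRight c p.1 * f p.2 =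
      ∑ p ∈ antidiagonal n, c p.1 * f p.2 := by
  simp [Nat.sum_antidiagonal_succ, shiftRight]

/-- The three-term recurrence, in normalized form, of the convolution of `ρ ^ j * B_j / [j]_q!`
with `H_m / [m]_q!`. -/
lemma sum_qBNorm_mul_qHermiteNorm_succ {q : ℝ} (hq : |q| < 1) (x y ρ : ℝ) (n : ℕ) :
    qInt q (n + 2) *
        ∑ p ∈ antidiagonal (n + 2), ρ ^ p.1 * qBNorm q y p.1 * qHermiteNorm q x p.2 =
      (x - ρ * y * q ^ (n + 1)) *
          ∑ p ∈ antidiagonal (n + 1), ρ ^ p.1 * qBNorm q y p.1 * qHermiteNorm q x p.2 -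
        (1 - ρ ^ 2 * q ^ n) *
          ∑ p ∈ antidiagonal n, ρ ^ p.1 * qBNorm q y p.1 * qHermiteNorm q x p.2 := by
  set h := qHermiteNorm q x
  set b := qBNorm q y
  have split : qInt q (n + 2) * ∑ p ∈ antidiagonal (n + 2), ρ ^ p.1 * b p.1 * h p.2 =
      ∑ p ∈ antidiagonal (n + 2), ρ ^ p.1 * b p.1 * (qInt q p.2 * h p.2) +
        ∑ p ∈ antidiagonal (n + 2), ρ ^ p.1 * (qInt q p.1 * b p.1) * (q ^ p.2 * h p.2) := by
    rw [mul_sum, ← sum_add_distrib]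
    refine sum_congr rfl fun p hp => ?_
    rw [← mem_antidiagonal.mp hp, add_comm, qInt_add]
    ring
  have hx : ∑ p ∈ antidiagonal (n + 2), ρ ^ p.1 * b p.1 * (qInt q p.2 * h p.2) =
      x * ∑ p ∈ antidiagonal (n + 1), ρ ^ p.1 * b p.1 * h p.2 -
        ∑ p ∈ antidiagonal n, ρ ^ p.1 * b p.1 * h p.2 := by
    rw [← sum_antidiagonal_shiftRight_snd (fun j => ρ ^ j * b j) h n, Nat.sum_antidiagonal_succ',
      mul_sum, ← sum_sub_distrib]
    simp only [qInt_zero, zero_mul, mul_zero, zero_add]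
    refine sum_congr rfl fun p _ => ?_
    linear_combination (-(ρ ^ p.1 * b p.1)) * qHermiteNorm_succ hq x p.2
  have hy : ∑ p ∈ antidiagonal (n + 2), ρ ^ p.1 * (qInt q p.1 * b p.1) * (q ^ p.2 * h p.2) =
      -(ρ * y * q ^ (n + 1)) * ∑ p ∈ antidiagonal (n + 1), ρ ^ p.1 * b p.1 * h p.2 +
        ρ ^ 2 * q ^ n * ∑ p ∈ antidiagonal n, ρ ^ p.1 * b p.1 * h p.2 := by
    rw [← sum_antidiagonal_shiftRight_fst (fun j => ρ ^ j * b j) h n, Nat.sum_antidiagonal_succ,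
      mul_sum, mul_sum, ← sum_add_distrib]
    simp only [qInt_zero, zero_mul, mul_zero, zero_add]
    refine sum_congr rfl fun p hp => ?_
    have hp' : p.1 + p.2 = n + 1 := mem_antidiagonal.mp hp
    rw [qBNorm_succ hq y p.1, ← hp']
    rcases p with ⟨_ | j, m⟩
    · simp [shiftRight]
      ring
    · have hn : n = j + m := by simp only at hp'; omega
      subst hn
      simp only [shiftRight, Nat.add_sub_cancel]
      ring
  rw [split, hx, hy]
  ring

/-- The generating function of the `P_n` is the product of those of the `B_n` and the `H_n`. -/
lemma ASC_eq_sum_qBNorm_mul_qHermiteNorm {q : ℝ} (hq : |q| < 1) (x y ρ : ℝ) (n : ℕ) :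
    ASC q y ρ n x = qFact q n *
      ∑ p ∈ antidiagonal n, ρ ^ p.1 * qBNorm q y p.1 * qHermiteNorm q x p.2 := by
  induction n using Nat.twoStepInduction with
  | zero => simp [ASC, qFact, qBNorm, qHermiteNorm, qB, qHermite]
  | one =>
    simp [ASC, qFact, qBNorm, qHermiteNorm, qB, qHermite, qInt, Nat.sum_antidiagonal_succ]
    ring
  | more n ih₀ ih₁ =>
    rw [qFact_succ, mul_assoc, sum_qBNorm_mul_qHermiteNorm_succ hq, ASC, ih₀, ih₁, qFact_succ]
    ring

/-- The exponent of `q` attached to `H_s(y|q)` in `B_{2k+s}(y|q)`. -/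
def qBExponent (k s : ℕ) : ℕ := k * (k - 1) + s * (s - 1) / 2 + k * s

lemma qBExponent_succ_left (k s : ℕ) :
    qBExponent (k + 1) s = qBExponent k s + 2 * k + s := by
  cases k with
  | zero => simp [qBExponent]
  | succ k =>
    simp only [qBExponent, Nat.add_sub_cancel]
    ring

lemma qBExponent_succ_right (k s : ℕ) :
    qBExponent k (s + 1) = qBExponent k s + s + k := by
  have h : (s + 1) * (s + 1 - 1) / 2 = s * (s - 1) / 2 + s := by
    rw [← Nat.choose_two_right, ← Nat.choose_two_right, Nat.choose_succ_succ' s 1,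
      Nat.choose_one_right, add_comm]
  rw [qBExponent, qBExponent, h]
  ring

/-- The `k`-th term of the expansion of `B_n(y|q) / [n]_q!` in q-Hermite polynomials. -/
def qBTerm (q y : ℝ) (n k : ℕ) : ℝ :=
  if 2 * k ≤ n then
    (-1) ^ n * q ^ qBExponent k (n - 2 * k) / qFact q k * qHermiteNorm q y (n - 2 * k)
  else 0

/-- The lower-order part of `y * qBTerm q y n k`. -/
def qBTermLower (q y : ℝ) (n k : ℕ) : ℝ :=
  if 2 * k ≤ n then
    (-1) ^ n * q ^ qBExponent k (n - 2 * k) / qFact q k *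
      shiftRight (qHermiteNorm q y) (n - 2 * k)
  else 0

lemma qBTerm_zero_right_succ {q : ℝ} (hq : |q| < 1) (y : ℝ) (n : ℕ) :
    qInt q (n + 1) * qBTerm q y (n + 1) 0 =
      -q ^ n * (y * qBTerm q y n 0 - qBTermLower q y n 0) := by
  have h := qHermiteNorm_succ hq y n
  simp only [qBTerm, qBTermLower, mul_zero, Nat.zero_le, if_true, Nat.sub_zero,
    qBExponent_succ_right]
  linear_combination (-((-1) ^ n * q ^ qBExponent 0 n / qFact q 0 * -q ^ n)) * h

lemma qBTerm_succ_succ {q : ℝ} (hq : |q| < 1) (y : ℝ) (n k : ℕ) :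
    qInt q (n + 2) * qBTerm q y (n + 2) (k + 1) =
      -q ^ (n + 1) * (y * qBTerm q y (n + 1) (k + 1) - qBTermLower q y (n + 1) (k + 1)
        + qBTermLower q y (n + 1) k) + q ^ n * qBTerm q y n k := by
  by_cases hk : 2 * k ≤ n
  · obtain ⟨s, rfl⟩ := Nat.exists_eq_add_of_le hk
    have h₀ := qFact_ne_zero hq k
    have h₁ := (qInt_pos hq k).ne'
    have hI : qInt q (2 * k + s + 2) =
        qInt q (k + 1) + q ^ (k + 1) * (qInt q s + q ^ s * qInt q (k + 1)) := by
      rw [← qInt_add, ← qInt_add]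
      congr 1
      ring
    have e₂ : 2 * k + s + 2 - 2 * (k + 1) = s := by omega
    have e₁ : 2 * k + s + 1 - 2 * k = s + 1 := by omega
    have e₀ : 2 * k + s - 2 * k = s := by omega
    have c₂ : 2 * (k + 1) ≤ 2 * k + s + 2 := by omega
    have c₁ : 2 * k ≤ 2 * k + s + 1 := by omega
    cases s with
    | zero =>
      have c : ¬ 2 * (k + 1) ≤ 2 * k + 0 + 1 := by omega
      simp only [qBTerm, qBTermLower, e₂, e₁, e₀, if_pos c₂, if_pos c₁, if_pos hk, if_neg c,
        shiftRight, hI, qInt_zero, qBExponent_succ_left, qBExponent_succ_right, qFact_succ]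
      field_simp
      ring
    | succ s =>
      have c : 2 * (k + 1) ≤ 2 * k + (s + 1) + 1 := by omega
      have e : 2 * k + (s + 1) + 1 - 2 * (k + 1) = s := by omega
      simp only [qBTerm, qBTermLower, e₂, e₁, e₀, e, if_pos c₂, if_pos c₁, if_pos hk, if_pos c]
      rw [mul_left_comm y, qHermiteNorm_succ hq]
      simp only [shiftRight, hI, qBExponent_succ_left, qBExponent_succ_right, qFact_succ]
      field_simp
      ring
  · have c₂ : ¬ 2 * (k + 1) ≤ n + 2 := by omega
    have c₁ : ¬ 2 * (k + 1) ≤ n + 1 := by omega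
    simp only [qBTerm, qBTermLower, if_neg c₂, if_neg c₁, if_neg hk]
    split_ifs with c
    · rw [show n + 1 - 2 * k = 0 by omega]
      simp [shiftRight]
    · simp

lemma qBTermLower_eq_zero (q y : ℝ) {n k : ℕ} (h : n ≤ 2 * k) : qBTermLower q y n k = 0 := by
  rw [qBTermLower, Nat.sub_eq_zero_of_le h]
  simp [shiftRight]

/-- The expansion of `B_n(y|q)` in q-Hermite polynomials, padded with vanishing terms. -/
lemma qBNorm_eq_sum_qBTerm {q : ℝ} (hq : |q| < 1) (y : ℝ) (n N : ℕ) (hN : n ≤ 2 * N + 1) :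
    qBNorm q y n = ∑ k ∈ range (N + 1), qBTerm q y n k := by
  induction n using Nat.twoStepInduction generalizing N with
  | zero =>
    rw [sum_range_succ']
    simp [qBTerm, qBNorm, qB, qFact, qBExponent, qHermiteNorm, qHermite]
  | one =>
    have h (k : ℕ) : ¬ 2 * (k + 1) ≤ 1 := by omega
    rw [sum_range_succ']
    simp [qBTerm, qBNorm, qB, qFact, qBExponent, qHermiteNorm, qHermite, qInt, h]
  | more n ih₀ ih₁ =>
    obtain ⟨M, rfl⟩ : ∃ M, N = M + 1 := ⟨N - 1, by omega⟩
    have hrec := qBNorm_succ hq y (n + 1)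
    simp only [shiftRight, Nat.add_sub_cancel] at hrec
    rw [ih₀ M (by omega), ih₁ (M + 1) (by omega)] at hrec
    refine mul_left_cancel₀ (qInt_pos hq (n + 1)).ne' (hrec.trans ?_)
    have hlower : ∑ k ∈ range (M + 1 + 1), qBTermLower q y (n + 1) k =
        ∑ k ∈ range (M + 1), qBTermLower q y (n + 1) k := by
      rw [sum_range_succ, qBTermLower_eq_zero q y (by omega), add_zero]
    symm
    rw [mul_sum, sum_range_succ' _ (M + 1), qBTerm_zero_right_succ hq y (n + 1)]
    simp only [qBTerm_succ_succ hq, sum_add_distrib, sum_sub_distrib, ← mul_sum]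
    rw [← hlower, sum_range_succ' (fun k => qBTerm q y (n + 1) k),
      sum_range_succ' (fun k => qBTermLower q y (n + 1) k)]
    ring

lemma sum_range_qBTerm {n k : ℕ} (h : 2 * k ≤ n) (q y : ℝ) (f : ℕ → ℝ) :
    ∑ j ∈ range (n + 1), f j * qBTerm q y j k =
      ∑ s ∈ range (n - 2 * k + 1), f (2 * k + s) * qBTerm q y (2 * k + s) k := by
  rw [show n + 1 = 2 * k + (n - 2 * k + 1) by omega, sum_range_add, add_eq_right]
  refine sum_eq_zero fun j hj => ?_
  rw [qBTerm, if_neg (by have := mem_range.mp hj; omega), mul_zero]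

/-- expansion of Al-Salam–Chihara polynomials in q-Hermite polynomials. -/
theorem ASC_expansion_in_qHermite (n : ℕ) (x y ρ q : ℝ) (hq : |q| < 1) :
    ASC q y ρ n x =
      ∑ k ∈ Finset.range (n / 2 + 1),
        qBinom q n k * qBinom q (n - k) k * qFact q k * q ^ (k * (k - 1)) * ρ ^ (2 * k) *
          ∑ s ∈ Finset.range (n - 2 * k + 1),
            (-1 : ℝ) ^ s * qBinom q (n - 2 * k) s * q ^ (s * (s - 1) / 2) * (q ^ k * ρ) ^ s *
              qHermite q (n - 2 * k - s) x * qHermite q s y := by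
  have hb (j : ℕ) (hj : j ∈ range (n + 1)) :
      ρ ^ j * qBNorm q y j * qHermiteNorm q x (n - j) =
        ∑ k ∈ range (n / 2 + 1), ρ ^ j * qHermiteNorm q x (n - j) * qBTerm q y j k := by
    rw [qBNorm_eq_sum_qBTerm hq y j (n / 2) (by have := mem_range.mp hj; omega), ← mul_sum]
    ring
  rw [ASC_eq_sum_qBNorm_mul_qHermiteNorm hq,
    Nat.sum_antidiagonal_eq_sum_range_succ
      (fun i j => ρ ^ i * qBNorm q y i * qHermiteNorm q x j),
    sum_congr rfl hb, sum_comm, mul_sum]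
  refine sum_congr rfl fun k hk => ?_
  have hk : 2 * k ≤ n := by have := mem_range.mp hk; omega
  rw [sum_range_qBTerm hk q y (fun j => ρ ^ j * qHermiteNorm q x (n - j)), mul_sum, mul_sum]
  refine sum_congr rfl fun s hs => ?_
  have hs : s ≤ n - 2 * k := by have := mem_range.mp hs; omega
  have f₁ := qFact_ne_zero hq (n - k)
  have f₂ := qFact_ne_zero hq (n - 2 * k)
  have f₃ := qFact_ne_zero hq (n - 2 * k - s)
  have f₄ := qFact_ne_zero hq k
  have f₅ := qFact_ne_zero hq s
  have hsign : (-1 : ℝ) ^ (2 * k + s) = (-1) ^ s := by rw [pow_add, pow_mul]; simp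
  rw [qBTerm, if_pos (by omega), qBinom, qBinom, qBinom, if_pos (by omega), if_pos (by omega),
    if_pos hs, qBExponent, qHermiteNorm, qHermiteNorm, hsign,
    show n - (2 * k + s) = n - 2 * k - s by omega, show 2 * k + s - 2 * k = s by omega,
    show n - k - k = n - 2 * k by omega]
  field_simp
  ring
end
end

section
/- (Poisson–Mehler formula) For all real q, ρ with |q| < 1 and |ρ| < 1, and all x, y ∈ S(q), the series Σ_{n=0}^∞ (ρⁿ/[n]_q!)·H_n(x|q)·H_n(y|q) converges and equals (ρ²;q)_∞ / ∏_{k=0}^∞ W_k(x,y,ρ|q). -/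
noncomputable section

open Finset

open Filter Topology

/-- The continuous q-Hermite polynomials in the variable `a = 2 cos θ`. -/
def contQHermite (q a : ℝ) : ℕ → ℝ
  | 0 => 1
  | 1 => a
  | n + 2 => a * contQHermite q a (n + 1) - (1 - q ^ (n + 1)) * contQHermite q a n

lemma contQHermite_add_two (q a : ℝ) (n : ℕ) :
    contQHermite q a (n + 2) =
      a * contQHermite q a (n + 1) - (1 - q ^ (n + 1)) * contQHermite q a n := by
  rw [contQHermite]

lemma qInt_mul_one_sub (q : ℝ) (n : ℕ) : qInt q n * (1 - q) = 1 - q ^ n :=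
  geom_sum_mul_neg q n

lemma contQHermite_eq_qHermite (q x s : ℝ) (hs : s ^ 2 = 1 - q) :
    ∀ n, contQHermite q (s * x) n = s ^ n * qHermite q n x
  | 0 => by simp [contQHermite, qHermite]
  | 1 => by simp [contQHermite, qHermite]
  | n + 2 => by
    rw [contQHermite_add_two, contQHermite_eq_qHermite q x s hs (n + 1),
      contQHermite_eq_qHermite q x s hs n, qHermite, ← qInt_mul_one_sub, ← hs]
    ring

lemma qPoch_succ (a q : ℝ) (n : ℕ) : qPoch a q (n + 1) = qPoch a q n * (1 - a * q ^ n) := by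
  rw [qPoch, prod_range_succ, qPoch]

lemma qFact_mul_one_sub_pow (q : ℝ) (n : ℕ) : qFact q n * (1 - q) ^ n = qPoch q q n := by
  induction n with
  | zero => simp [qFact, qPoch]
  | succ n ih =>
    rw [qPoch_succ, ← ih, ← pow_succ', ← qInt_mul_one_sub, qFact, prod_range_succ, ← qFact]
    ring

lemma one_sub_pow_succ_pos {q : ℝ} (hq : |q| < 1) (n : ℕ) : 0 < 1 - q ^ (n + 1) := by
  have h : |q ^ (n + 1)| < 1 := by
    rw [abs_pow]
    exact pow_lt_one₀ (abs_nonneg q) hq n.succ_ne_zero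
  linarith [(abs_lt.1 h).2]

lemma qPoch_self_pos {q : ℝ} (hq : |q| < 1) (n : ℕ) : 0 < qPoch q q n :=
  prod_pos fun j _ => by
    rw [← pow_succ']
    exact one_sub_pow_succ_pos hq j

lemma abs_mul_pow_lt_one {q t : ℝ} (hq : |q| < 1) (ht : |t| < 1) (n : ℕ) : |t * q ^ n| < 1 := by
  rw [abs_mul, abs_pow]
  exact mul_lt_one_of_nonneg_of_lt_one_left (abs_nonneg t) ht (pow_le_one₀ (abs_nonneg q) hq.le)

/-- The coefficients of the Poisson–Mehler kernel. -/
def mehlerCoeff (q a b : ℝ) (n : ℕ) : ℝ :=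
  contQHermite q a n * contQHermite q b n / qPoch q q n

lemma mehlerCoeff_zero (q a b : ℝ) : mehlerCoeff q a b 0 = 1 := by
  simp [mehlerCoeff, contQHermite, qPoch]

lemma term_eq_mehlerCoeff {q : ℝ} (hq : |q| < 1) (ρ x y : ℝ) (n : ℕ) :
    ρ ^ n / qFact q n * qHermite q n x * qHermite q n y =
      mehlerCoeff q (√(1 - q) * x) (√(1 - q) * y) n * ρ ^ n := by
  have h1 : 0 < 1 - q := by linarith [(abs_lt.1 hq).2]
  have hs : √(1 - q) ^ 2 = 1 - q := Real.sq_sqrt h1.le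
  have hP := (qPoch_self_pos hq n).ne'
  have hF := qFact_mul_one_sub_pow q n
  have hF0 : qFact q n ≠ 0 := fun h => hP (by rw [← hF, h, zero_mul])
  rw [mehlerCoeff, contQHermite_eq_qHermite q x _ hs, contQHermite_eq_qHermite q y _ hs, ← hF]
  have hsn : √(1 - q) ^ n * √(1 - q) ^ n = (1 - q) ^ n := by rw [← mul_pow, ← sq, hs]
  field_simp
  rw [sq, hsn]

lemma mehlerCoeff_recurrence {q : ℝ} (hq : |q| < 1) (a b : ℝ) (n : ℕ) :
    (1 - q ^ (n + 4)) * mehlerCoeff q a b (n + 4) - a * b * mehlerCoeff q a b (n + 3)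
      + (a ^ 2 + b ^ 2 - 2 + (1 + q) * q ^ (n + 2)) * mehlerCoeff q a b (n + 2)
      - a * b * mehlerCoeff q a b (n + 1) + (1 - q ^ (n + 1)) * mehlerCoeff q a b n = 0 := by
  have hP := (qPoch_self_pos hq n).ne'
  have h1 := (one_sub_pow_succ_pos hq n).ne'
  have h2 := (one_sub_pow_succ_pos hq (n + 1)).ne'
  have h3 := (one_sub_pow_succ_pos hq (n + 2)).ne'
  have h4 := (one_sub_pow_succ_pos hq (n + 3)).ne'
  simp only [mehlerCoeff, qPoch_succ, contQHermite_add_two, ← pow_succ']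
  generalize contQHermite q a n = A, contQHermite q b n = B,
    contQHermite q a (n + 1) = A', contQHermite q b (n + 1) = B', qPoch q q n = P at *
  have e2 : q ^ (n + 2) = q * q ^ (n + 1) := pow_succ' ..
  have e3 : q ^ (n + 3) = q ^ 2 * q ^ (n + 1) := by ring
  have e1 : q ^ (n + 1) = 1 - (1 - q ^ (n + 1)) := by ring
  simp only [add_assoc, Nat.reduceAdd] at h1 h2 h3 h4 ⊢
  generalize 1 - q ^ (n + 4) = p₄, hp₃ : 1 - q ^ (n + 3) = p₃, hp₂ : 1 - q ^ (n + 2) = p₂,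
    hp₁ : 1 - q ^ (n + 1) = p₁ at *
  field_simp
  subst hp₂ hp₃
  rw [e3, e2, e1]
  ring

lemma exists_eq_two_mul_cos {a : ℝ} (ha : |a| ≤ 2) : ∃ θ : ℝ, a = 2 * Real.cos θ := by
  obtain ⟨h1, h2⟩ := abs_le.1 ha
  exact ⟨Real.arccos (a / 2), by rw [Real.cos_arccos] <;> linarith⟩

lemma one_sub_two_mul_cos_add_sq_pos {t : ℝ} (ht : |t| < 1) (θ : ℝ) :
    0 < 1 - 2 * t * Real.cos θ + t ^ 2 := by
  have hc : |t * Real.cos θ| < 1 := by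
    rw [abs_mul]
    exact mul_lt_one_of_nonneg_of_lt_one_left (abs_nonneg t) ht (Real.abs_cos_le_one θ)
  have h : 0 < 1 - t * Real.cos θ := by linarith [(abs_lt.1 hc).2]
  calc 0 < (1 - t * Real.cos θ) ^ 2 + (t * Real.sin θ) ^ 2 := by positivity
    _ = _ := by linear_combination t ^ 2 * Real.sin_sq_add_cos_sq θ

/-- The factor `W_k` as a function of `a = √(1-q) x`, `b = √(1-q) y` and `t = ρ q^k`. -/
def mehlerFactor (a b t : ℝ) : ℝ :=
  (1 - t ^ 2) ^ 2 - a * b * t * (1 + t ^ 2) + t ^ 2 * (a ^ 2 + b ^ 2)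

lemma mehlerFactor_pos {a b t : ℝ} (ha : |a| ≤ 2) (hb : |b| ≤ 2) (ht : |t| < 1) :
    0 < mehlerFactor a b t := by
  obtain ⟨θ, rfl⟩ := exists_eq_two_mul_cos ha
  obtain ⟨φ, rfl⟩ := exists_eq_two_mul_cos hb
  have h := mul_pos (one_sub_two_mul_cos_add_sq_pos ht (θ + φ))
    (one_sub_two_mul_cos_add_sq_pos ht (θ - φ))
  refine h.trans_eq ?_
  rw [mehlerFactor, Real.cos_add, Real.cos_sub]
  linear_combination (-4 * t ^ 2 * Real.sin φ ^ 2) * Real.sin_sq_add_cos_sq θ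
    + (4 * t ^ 2 * Real.cos θ ^ 2 - 4 * t ^ 2) * Real.sin_sq_add_cos_sq φ

lemma Wk_eq_mehlerFactor {q : ℝ} (hq : q < 1) (x y t : ℝ) (k : ℕ) :
    Wk q x y t k = mehlerFactor (√(1 - q) * x) (√(1 - q) * y) (t * q ^ k) := by
  have hs : √(1 - q) ^ 2 = 1 - q := Real.sq_sqrt (by linarith)
  rw [Wk, mehlerFactor]
  linear_combination (x * y * t * q ^ k * (1 + t ^ 2 * q ^ (2 * k))
    - t ^ 2 * q ^ (2 * k) * (x ^ 2 + y ^ 2)) * hs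

/-- For every `s > 1` the polynomials have a majorant which eventually grows at most like `s ^ n`. -/
lemma exists_majorant_contQHermite {q a s : ℝ} (hq : |q| < 1) (ha : |a| ≤ 2) (hs : 1 < s) :
    ∃ N : ℕ → ℝ, (∀ n, |contQHermite q a n| ≤ N n) ∧ ∀ᶠ n in atTop, N (n + 1) ≤ s * N n := by
  obtain ⟨θ, rfl⟩ := exists_eq_two_mul_cos ha
  set h := contQHermite q (2 * Real.cos θ) with hh
  set e : ℂ := Complex.exp (θ * Complex.I) with he
  set e' : ℂ := Complex.exp (-(θ * Complex.I)) with he'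
  have hee : e * e' = 1 := by rw [he, he', ← Complex.exp_add]; simp
  have hsum : e + e' = 2 * Real.cos θ := by
    rw [he, he', Complex.ofReal_cos, Complex.cos]; ring_nf
  have hn : ‖e‖ = 1 := Complex.norm_exp_ofReal_mul_I θ
  have hn' : ‖e'‖ = 1 := by
    rw [he', ← neg_mul, ← Complex.ofReal_neg]; exact Complex.norm_exp_ofReal_mul_I _
  set D : ℕ → ℂ := fun n => h (n + 1) - e * h n with hD
  have hs0 : 0 < s - 1 := by linarith
  have step (n : ℕ) : |h (n + 1)| ≤ |h n| + ‖D n‖ := by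
    have : (h (n + 1) : ℂ) = e * h n + D n := by simp [hD]
    calc |h (n + 1)| = ‖(h (n + 1) : ℂ)‖ := by simp
      _ ≤ ‖e * h n‖ + ‖D n‖ := by rw [this]; exact norm_add_le _ _
      _ = _ := by simp [hn]
  have stepD (n : ℕ) : ‖D (n + 1)‖ ≤ ‖D n‖ + |q| ^ (n + 1) * |h n| := by
    have : D (n + 1) = e' * D n + (q : ℂ) ^ (n + 1) * h n := by
      simp only [hD, hh, contQHermite_add_two]
      push_cast at hsum ⊢
      linear_combination (-(contQHermite q (2 * Real.cos θ) (n + 1) : ℂ)) * hsum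
        + (contQHermite q (2 * Real.cos θ) n : ℂ) * hee
    calc ‖D (n + 1)‖ ≤ ‖e' * D n‖ + ‖(q : ℂ) ^ (n + 1) * h n‖ := by
          rw [this]; exact norm_add_le _ _
      _ = _ := by simp [hn']
  refine ⟨fun n => |h n| + (s - 1)⁻¹ * ‖D n‖, fun n => ?_, ?_⟩
  · have : 0 ≤ (s - 1)⁻¹ * ‖D n‖ := by positivity
    linarith
  · have hlim : Tendsto (fun n : ℕ => |q| ^ (n + 1)) atTop (𝓝 0) :=
      (tendsto_pow_atTop_nhds_zero_of_lt_one (abs_nonneg q) hq).comp (tendsto_add_atTop_nat 1)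
    filter_upwards [hlim.eventually_le_const (show 0 < (s - 1) ^ 2 by positivity)] with n hqn
    have h1 := mul_le_mul_of_nonneg_left (stepD n) (inv_pos.2 hs0).le
    have h2 : (s - 1)⁻¹ * (|q| ^ (n + 1) * |h n|) ≤ (s - 1) * |h n| := by
      calc _ ≤ (s - 1)⁻¹ * ((s - 1) ^ 2 * |h n|) := by gcongr
        _ = _ := by field_simp
    have h3 : (s - 1) * ((s - 1)⁻¹ * ‖D n‖) = ‖D n‖ := by field_simp
    linarith [step n]

lemma summable_mehlerCoeff {q a b t : ℝ} (hq : |q| < 1) (ha : |a| ≤ 2) (hb : |b| ≤ 2)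
    (ht : |t| < 1) : Summable fun n => |mehlerCoeff q a b n * t ^ n| := by
  obtain ⟨s, hst, hs⟩ : ∃ s : ℝ, s ^ 3 * |t| < 1 ∧ 1 < s := by
    have hc : Tendsto (fun s : ℝ => s ^ 3 * |t|) (𝓝[>] 1) (𝓝 (1 ^ 3 * |t|)) :=
      (Continuous.tendsto (by fun_prop) 1).mono_left nhdsWithin_le_nhds
    exact ((hc.eventually_lt_const (by simpa using ht)).and self_mem_nhdsWithin).exists
  obtain ⟨M, hM, hM'⟩ := exists_majorant_contQHermite hq ha hs
  obtain ⟨N, hN, hN'⟩ := exists_majorant_contQHermite hq hb hs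
  have hM0 n : 0 ≤ M n := (abs_nonneg _).trans (hM n)
  have hN0 n : 0 ≤ N n := (abs_nonneg _).trans (hN n)
  have hP n := qPoch_self_pos hq n
  have hP' : ∀ᶠ n in atTop, (qPoch q q (n + 1))⁻¹ ≤ s * (qPoch q q n)⁻¹ := by
    have hlim : Tendsto (fun n : ℕ => s * (1 - q ^ (n + 1))) atTop (𝓝 (s * (1 - 0))) :=
      (((tendsto_pow_atTop_nhds_zero_of_abs_lt_one hq).comp
        (tendsto_add_atTop_nat 1)).const_sub 1).const_mul s
    filter_upwards [hlim.eventually_const_le (show 1 < s * (1 - 0) by simpa using hs)] with n hn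
    have h1 := one_sub_pow_succ_pos hq n
    rw [qPoch_succ, ← pow_succ', mul_inv, mul_comm]
    refine mul_le_mul_of_nonneg_right ?_ (inv_pos.2 (hP n)).le
    rwa [inv_le_iff_one_le_mul₀ h1]
  have hsum : Summable fun n => M n * N n * (qPoch q q n)⁻¹ * |t| ^ n := by
    refine summable_of_ratio_norm_eventually_le hst ?_
    filter_upwards [hM', hN', hP'] with n h1 h2 h3
    have hp (n : ℕ) : 0 ≤ M n * N n * (qPoch q q n)⁻¹ * |t| ^ n :=
      mul_nonneg (mul_nonneg (mul_nonneg (hM0 n) (hN0 n)) (inv_pos.2 (hP n)).le) (by positivity)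
    rw [Real.norm_of_nonneg (hp _), Real.norm_of_nonneg (hp _)]
    have hs0 : 0 ≤ s := by linarith
    calc M (n + 1) * N (n + 1) * (qPoch q q (n + 1))⁻¹ * |t| ^ (n + 1)
        ≤ (s * M n) * (s * N n) * (s * (qPoch q q n)⁻¹) * |t| ^ (n + 1) := by
          have := hM0 n
          have := hM0 (n + 1)
          have := hN0 n
          have := hN0 (n + 1)
          have := (inv_pos.2 (hP (n + 1))).le
          gcongr
      _ = _ := by ring
  refine hsum.of_nonneg_of_le (fun n => abs_nonneg _) fun n => ?_
  rw [mehlerCoeff, abs_mul, abs_div, abs_mul, abs_pow, abs_of_pos (hP n), div_eq_mul_inv]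
  have := (inv_pos.2 (hP n)).le
  have := hM0 n
  gcongr
  exacts [hM n, hN n]

/-- The Poisson–Mehler kernel as a power series in `t`. -/
def mehlerSum (q a b t : ℝ) : ℝ := ∑' n, mehlerCoeff q a b n * t ^ n

lemma mehlerSum_functional_equation {q a b t : ℝ} (hq : |q| < 1) (ha : |a| ≤ 2) (hb : |b| ≤ 2)
    (ht : |t| < 1) :
    mehlerSum q a b t * mehlerFactor a b t =
      (1 - t ^ 2) * (1 - t ^ 2 * q) * mehlerSum q a b (t * q) := by
  have htq : |t * q| < 1 := by simpa using abs_mul_pow_lt_one hq ht 1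
  have hS := (summable_mehlerCoeff hq ha hb ht).of_abs.hasSum
  have hS' := (summable_mehlerCoeff hq ha hb htq).of_abs.hasSum
  have shift {f : ℕ → ℝ} {c : ℝ} (hf : HasSum f c) (k : ℕ) :=
    (hasSum_nat_add_iff' k).2 hf
  have key := (((((shift hS 4).sub (shift hS' 4)).sub ((shift hS 3).mul_left (a * b * t))).add
    ((shift hS 2).mul_left (t ^ 2 * (a ^ 2 + b ^ 2 - 2)))).add
    ((shift hS' 2).mul_left (t ^ 2 * (1 + q)))).sub ((shift hS 1).mul_left (a * b * t ^ 3)) |>.add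
    (hS.mul_left (t ^ 4)) |>.sub (hS'.mul_left (t ^ 4 * q))
  have hz := key.unique (a₂ := 0) (by
    refine hasSum_zero.congr_fun fun n => ?_
    linear_combination t ^ (n + 4) * mehlerCoeff_recurrence hq a b n)
  have h1 : 1 - q ≠ 0 := by simpa using (one_sub_pow_succ_pos hq 0).ne'
  have h2 : 1 - q ^ 2 ≠ 0 := (one_sub_pow_succ_pos hq 1).ne'
  have h3 : 1 - q ^ 3 ≠ 0 := (one_sub_pow_succ_pos hq 2).ne'
  have c0 := mehlerCoeff_zero q a b
  have c1 : (1 - q) * mehlerCoeff q a b 1 = a * b := by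
    simp [mehlerCoeff, contQHermite, qPoch, field]
  have c2 : (1 - q ^ 2) * mehlerCoeff q a b 2 - a * b * mehlerCoeff q a b 1
      + (a ^ 2 + b ^ 2 - 2 + (1 + q)) * mehlerCoeff q a b 0 = 0 := by
    simp [mehlerCoeff, contQHermite, qPoch_succ]
    simp [qPoch]
    field_simp
    ring
  have c3 : (1 - q ^ 3) * mehlerCoeff q a b 3 - a * b * mehlerCoeff q a b 2
      + (a ^ 2 + b ^ 2 - 2 + (1 + q) * q) * mehlerCoeff q a b 1
      - a * b * mehlerCoeff q a b 0 = 0 := by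
    simp [mehlerCoeff, contQHermite, qPoch_succ]
    simp [qPoch]
    field_simp
    ring
  simp only [sum_range_succ, range_zero, sum_empty] at hz
  change mehlerSum q a b t - _ - (mehlerSum q a b (t * q) - _) - _ * (mehlerSum q a b t - _)
    + _ * (mehlerSum q a b t - _) + _ * (mehlerSum q a b (t * q) - _)
    - _ * (mehlerSum q a b t - _) + _ * mehlerSum q a b t - _ * mehlerSum q a b (t * q) = 0 at hz
  rw [mehlerFactor]
  linear_combination hz - t * a * b * c0 + t * c1 + t ^ 2 * c2 + t ^ 3 * c3

lemma mehlerSum_mul_prod {q a b t : ℝ} (hq : |q| < 1) (ha : |a| ≤ 2) (hb : |b| ≤ 2)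
    (ht : |t| < 1) (n : ℕ) :
    mehlerSum q a b t * ∏ k ∈ range n, mehlerFactor a b (t * q ^ k) =
      qPoch (t ^ 2) q (2 * n) * mehlerSum q a b (t * q ^ n) := by
  induction n with
  | zero => simp [qPoch]
  | succ n ih =>
    have h := mehlerSum_functional_equation hq ha hb (abs_mul_pow_lt_one hq ht n)
    rw [prod_range_succ, ← mul_assoc, ih, mul_assoc, h, show 2 * (n + 1) = 2 * n + 1 + 1 by ring,
      qPoch_succ, qPoch_succ]
    ring_nf

lemma tendsto_mehlerSum {q a b t : ℝ} (hq : |q| < 1) (ha : |a| ≤ 2) (hb : |b| ≤ 2)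
    (ht : |t| < 1) : Tendsto (fun n : ℕ => mehlerSum q a b (t * q ^ n)) atTop (𝓝 1) := by
  have h1 : (1 : ℝ) = ∑' n : ℕ, mehlerCoeff q a b n * 0 ^ n := by
    rw [tsum_eq_single 0 fun n hn => by simp [hn]]
    simp [mehlerCoeff_zero]
  rw [h1]
  refine tendsto_tsum_of_dominated_convergence (summable_mehlerCoeff hq ha hb ht) (fun k => ?_)
    (Eventually.of_forall fun n k => ?_)
  · have : Tendsto (fun n : ℕ => t * q ^ n) atTop (𝓝 0) := by
      simpa using (tendsto_pow_atTop_nhds_zero_of_abs_lt_one hq).const_mul t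
    exact (this.pow k).const_mul _
  · rw [Real.norm_eq_abs, abs_mul, abs_mul, abs_pow, abs_pow, abs_mul]
    gcongr
    rw [abs_pow]
    exact mul_le_of_le_one_right (abs_nonneg t) (pow_le_one₀ (abs_nonneg q) hq.le)

lemma summable_norm_mul_pow {q : ℝ} (hq : |q| < 1) (c : ℝ) :
    Summable fun k : ℕ => ‖c * q ^ k‖ :=
  ((summable_geometric_of_abs_lt_one hq).mul_left c).norm

lemma tendsto_qPoch {q : ℝ} (hq : |q| < 1) (c : ℝ) :
    Tendsto (qPoch c q) atTop (𝓝 (qPochInf c q)) := by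
  have h : Multipliable fun k : ℕ => 1 - c * q ^ k := by
    simpa [sub_eq_add_neg] using
      multipliable_one_add_of_summable (summable_norm_mul_pow hq (-c))
  exact h.tendsto_prod_tprod_nat

lemma summable_norm_mehlerFactor_sub_one {q : ℝ} (hq : |q| < 1) (a b t : ℝ) :
    Summable fun k : ℕ => ‖mehlerFactor a b (t * q ^ k) - 1‖ := by
  have hpow (j : ℕ) : Summable fun k : ℕ => (q ^ (j + 1)) ^ k :=
    summable_geometric_of_abs_lt_one (by
      rw [abs_pow]; exact pow_lt_one₀ (abs_nonneg q) hq j.succ_ne_zero)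
  refine Summable.norm ?_
  refine (((((hpow 0).mul_left (-(a * b * t))).add
    ((hpow 1).mul_left (t ^ 2 * (a ^ 2 + b ^ 2 - 2)))).add
    ((hpow 2).mul_left (-(a * b * t ^ 3)))).add ((hpow 3).mul_left (t ^ 4))).congr fun k => ?_
  rw [mehlerFactor]
  ring

lemma abs_sqrt_mul_le_two {q x : ℝ} (hq : q < 1) (hx : x ∈ Sq q) : |√(1 - q) * x| ≤ 2 := by
  have hs : 0 < √(1 - q) := Real.sqrt_pos.2 (by linarith)
  rw [abs_mul, abs_of_pos hs, ← le_div_iff₀' hs]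
  exact abs_le.2 hx

/-- Poisson–Mehler formula. -/
theorem poisson_mehler (q ρ x y : ℝ) (hq : |q| < 1) (hρ : |ρ| < 1)
    (hx : x ∈ Sq q) (hy : y ∈ Sq q) :
    HasSum (fun n : ℕ => ρ ^ n / qFact q n * qHermite q n x * qHermite q n y)
      (qPochInf (ρ ^ 2) q / ∏' k : ℕ, Wk q x y ρ k) := by
  have hq1 : q < 1 := (abs_lt.1 hq).2
  have ha := abs_sqrt_mul_le_two hq1 hx
  have hb := abs_sqrt_mul_le_two hq1 hy
  simp only [term_eq_mehlerCoeff hq, Wk_eq_mehlerFactor hq1]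
  generalize √(1 - q) * x = a, √(1 - q) * y = b at *
  have hsum := summable_norm_mehlerFactor_sub_one hq a b ρ
  have hmul : Multipliable fun k : ℕ => mehlerFactor a b (ρ * q ^ k) := by
    simpa using multipliable_one_add_of_summable hsum
  have hne : ∏' k : ℕ, mehlerFactor a b (ρ * q ^ k) ≠ 0 := by
    have := tprod_one_add_ne_zero_of_summable
      (f := fun k : ℕ => mehlerFactor a b (ρ * q ^ k) - 1) (fun k => ?_) hsum
    · simpa using this
    · simpa using (mehlerFactor_pos ha hb (abs_mul_pow_lt_one hq hρ k)).ne'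
  have hlim := hmul.tendsto_prod_tprod_nat.const_mul (mehlerSum q a b ρ)
  simp only [mehlerSum_mul_prod hq ha hb hρ] at hlim
  have h2 : Tendsto (fun n : ℕ => 2 * n) atTop atTop := tendsto_id.const_mul_atTop' two_pos
  have hlim' := ((tendsto_qPoch hq (ρ ^ 2)).comp h2).mul (tendsto_mehlerSum hq ha hb hρ)
  have heq := tendsto_nhds_unique hlim hlim'
  rw [mul_one] at heq
  rw [← heq, mul_div_cancel_right₀ _ hne]
  exact (summable_mehlerCoeff hq ha hb hρ).of_abs.hasSum
end
end
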